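/- If s = (s_{ij}) ∈ ℝ^D satisfies s_{ij} ≥ 0 for all pairs {i,j} with i,j ∈ {1,…,N−1}, then the integral defining the p-adic open string N-point zeta function diverges to +∞: ∫_{ℚ_p^{N−3}∖Λ} ∏_{i=2}^{N−2} |x_i|_p^{s_{1i}} |1−x_i|_p^{s_{(N−1)i}} ∏_{2≤i<j≤N−2} |x_i−x_j|_p^{s_{ij}} ∏ dx_i = +∞. -/

import Mathlib

open MeasureTheory Finset

noncomputable section

instance padicMS (p : ℕ) [Fact p.Prime] : MeasurableSpace ℚ_[p] := borel _
instance padicBS (p : ℕ) [Fact p.Prime] : BorelSpace ℚ_[p] := ⟨rfl⟩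

/-- The closed unit ball of `ℚ_[p]` (i.e. `ℤ_[p]`) as a positive compact subset. -/
def padicBall (p : ℕ) [Fact p.Prime] : TopologicalSpace.PositiveCompacts ℚ_[p] where
  carrier := Metric.closedBall 0 1
  isCompact' := isCompact_closedBall 0 1
  interior_nonempty' := ⟨0, Metric.ball_subset_interior_closedBall (Metric.mem_ball_self one_pos)⟩

/-- The Haar measure on `(ℚ_[p], +)`, normalized so that `ℤ_[p]` has measure `1`. -/
def padicHaar (p : ℕ) [Fact p.Prime] : Measure ℚ_[p] :=
  Measure.addHaarMeasure (padicBall p)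

instance padicHaarSF (p : ℕ) [Fact p.Prime] : SigmaFinite (padicHaar p) := by
  unfold padicHaar; infer_instance

/-- The product of normalized Haar measures on a finite power of `ℚ_[p]`. -/
def padicPi (p : ℕ) [Fact p.Prime] (ι : Type) [Fintype ι] : Measure (ι → ℚ_[p]) :=
  Measure.pi fun _ => padicHaar p

/-- `T = {2, …, N-2}`. -/
def Tset (N : ℕ) : Finset ℕ := Finset.Icc 2 (N - 2)

/-- The ordered pairs `(i, j)` with `i < j` and `i, j ∈ A`. -/
def pairsIn (A : Finset ℕ) : Finset (ℕ × ℕ) := (A ×ˢ A).filter fun q => q.1 < q.2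

/-- The coordinates of a point of `ℚ_p^A`, as a function on `ℕ` (junk value `0` off `A`). -/
def padicCoord {p : ℕ} [Fact p.Prime] {A : Finset ℕ} (x : A → ℚ_[p]) (n : ℕ) : ℚ_[p] :=
  if h : n ∈ A then x ⟨n, h⟩ else 0

/-- The complement of the divisor `Λ` in `ℚ_p^{N-3}`. -/
def ZNset (p N : ℕ) [Fact p.Prime] : Set (↥(Tset N) → ℚ_[p]) :=
  {x | (∀ i, x i ≠ 0 ∧ x i ≠ 1) ∧
    ∀ q ∈ pairsIn (Tset N), padicCoord x q.1 ≠ padicCoord x q.2}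

/-- The box of points each of whose coordinates `x i` lies within distance `1` of `p ^ (-(k + i))`. -/
def shiftedBox (p : ℕ) [Fact p.Prime] (A : Finset ℕ) (k : ℕ) : Set (A → ℚ_[p]) :=
  Set.univ.pi fun i => Metric.closedBall ((p : ℚ_[p]) ^ (-((k + i : ℕ) : ℤ))) 1

lemma padicHaar_closedBall (p : ℕ) [Fact p.Prime] (c : ℚ_[p]) :
    padicHaar p (Metric.closedBall c 1) = 1 := by
  have : (padicHaar p).IsAddLeftInvariant := by unfold padicHaar; infer_instance
  have h := measure_preimage_add (padicHaar p) (-c) (Metric.closedBall 0 1)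
  have h0 : padicHaar p (Metric.closedBall 0 1) = 1 :=
    Measure.addHaarMeasure_self (K₀ := padicBall p)
  rw [h0] at h
  rw [← h]
  congr 1
  ext x
  simp [dist_eq_norm, neg_add_eq_sub]

lemma padicPi_shiftedBox (p : ℕ) [Fact p.Prime] (A : Finset ℕ) (k : ℕ) :
    padicPi p A (shiftedBox p A k) = 1 := by
  simp [padicPi, shiftedBox, Measure.pi_pi, padicHaar_closedBall]

lemma measurableSet_shiftedBox (p : ℕ) [Fact p.Prime] (A : Finset ℕ) (k : ℕ) :
    MeasurableSet (shiftedBox p A k) :=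
  MeasurableSet.univ_pi fun _ => Metric.isClosed_closedBall.measurableSet

lemma norm_eq_of_mem_shiftedBox {p : ℕ} [Fact p.Prime] {A : Finset ℕ} {k : ℕ}
    {x : A → ℚ_[p]} (hx : x ∈ shiftedBox p A k) (i : A) (hi : 0 < (i : ℕ)) :
    ‖x i‖ = (p : ℝ) ^ (k + i : ℕ) := by
  have hp : (1 : ℝ) < p := by exact_mod_cast (Fact.out : p.Prime).one_lt
  have h1 : ‖x i - (p : ℚ_[p]) ^ (-((k + i : ℕ) : ℤ))‖ ≤ 1 := by
    simpa [dist_eq_norm] using hx i (Set.mem_univ i)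
  have h2 : ‖(p : ℚ_[p]) ^ (-((k + i : ℕ) : ℤ))‖ = (p : ℝ) ^ (k + i : ℕ) := by
    rw [Padic.norm_p_zpow, neg_neg, zpow_natCast]
  have h3 : (1 : ℝ) < (p : ℝ) ^ (k + i : ℕ) := one_lt_pow₀ hp (by omega)
  have h4 := IsUltrametricDist.norm_add_eq_max_of_norm_ne_norm
    (x := x i - (p : ℚ_[p]) ^ (-((k + i : ℕ) : ℤ))) (y := (p : ℚ_[p]) ^ (-((k + i : ℕ) : ℤ)))
    (by rw [h2]; exact (h1.trans_lt h3).ne)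
  rw [sub_add_cancel, h2, max_eq_right (h1.trans h3.le)] at h4
  exact h4

lemma pairwise_disjoint_shiftedBox (p : ℕ) [Fact p.Prime] {A : Finset ℕ} (i : A)
    (hi : 0 < (i : ℕ)) : Pairwise (Function.onFun Disjoint (shiftedBox p A)) := by
  have hp : (1 : ℝ) < p := by exact_mod_cast (Fact.out : p.Prime).one_lt
  intro k l hkl
  refine Set.disjoint_left.2 fun x hk hl => hkl ?_
  have h := (norm_eq_of_mem_shiftedBox hk i hi).symm.trans (norm_eq_of_mem_shiftedBox hl i hi)
  have := pow_right_injective₀ (by linarith) hp.ne' h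
  omega

lemma padicPi_iUnion_shiftedBox (p : ℕ) [Fact p.Prime] {A : Finset ℕ} (i : A)
    (hi : 0 < (i : ℕ)) : padicPi p A (⋃ k, shiftedBox p A k) = ⊤ := by
  rw [measure_iUnion (pairwise_disjoint_shiftedBox p i hi) (measurableSet_shiftedBox p A)]
  simp [padicPi_shiftedBox]

/-- By the ultrametric inequality, two `p`-adic numbers of distinct norms, one of norm at least `1`,
are at distance at least `1`. -/
lemma one_le_norm_sub_of_norm_ne {p : ℕ} [Fact p.Prime] {a b : ℚ_[p]} (ha : 1 ≤ ‖a‖)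
    (h : ‖a‖ ≠ ‖b‖) : 1 ≤ ‖a - b‖ := by
  have h' := IsUltrametricDist.norm_add_eq_max_of_norm_ne_norm (x := a) (y := -b)
    (by rwa [norm_neg])
  rw [sub_eq_add_neg, h']
  exact ha.trans (le_max_left _ _)

lemma one_lt_norm_padicCoord {p : ℕ} [Fact p.Prime] {N k : ℕ} {x : Tset N → ℚ_[p]}
    (hx : x ∈ shiftedBox p (Tset N) k) {i : ℕ} (hi : i ∈ Tset N) : 1 < ‖padicCoord x i‖ := by
  have hi' := Finset.mem_Icc.1 hi
  rw [padicCoord, dif_pos hi, norm_eq_of_mem_shiftedBox hx ⟨i, hi⟩ (by simp; omega)]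
  exact one_lt_pow₀ (by exact_mod_cast (Fact.out : p.Prime).one_lt) (by simp; omega)

lemma one_le_norm_one_sub_padicCoord {p : ℕ} [Fact p.Prime] {N k : ℕ} {x : Tset N → ℚ_[p]}
    (hx : x ∈ shiftedBox p (Tset N) k) {i : ℕ} (hi : i ∈ Tset N) :
    1 ≤ ‖1 - padicCoord x i‖ :=
  one_le_norm_sub_of_norm_ne norm_one.ge (by
    rw [norm_one]; exact (one_lt_norm_padicCoord hx hi).ne)

lemma one_le_norm_padicCoord_sub {p : ℕ} [Fact p.Prime] {N k : ℕ} {x : Tset N → ℚ_[p]}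
    (hx : x ∈ shiftedBox p (Tset N) k) {q : ℕ × ℕ} (hq : q ∈ pairsIn (Tset N)) :
    1 ≤ ‖padicCoord x q.1 - padicCoord x q.2‖ := by
  have hp : (1 : ℝ) < p := by exact_mod_cast (Fact.out : p.Prime).one_lt
  obtain ⟨hq', hlt⟩ := Finset.mem_filter.1 hq
  obtain ⟨h1, h2⟩ := Finset.mem_product.1 hq'
  have h1' := Finset.mem_Icc.1 h1
  refine one_le_norm_sub_of_norm_ne (one_lt_norm_padicCoord hx h1).le ?_
  rw [padicCoord, padicCoord, dif_pos h1, dif_pos h2,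
    norm_eq_of_mem_shiftedBox hx ⟨_, h1⟩ (by simp; omega),
    norm_eq_of_mem_shiftedBox hx ⟨_, h2⟩ (by simp; omega)]
  exact (pow_lt_pow_right₀ hp (by simpa using hlt)).ne

lemma shiftedBox_subset_ZNset (p : ℕ) [Fact p.Prime] (N k : ℕ) :
    shiftedBox p (Tset N) k ⊆ ZNset p N := by
  intro x hx
  refine ⟨fun i => ?_, fun q hq h => ?_⟩
  · have h := one_lt_norm_padicCoord hx i.2
    simp only [padicCoord, i.2, dite_true] at h
    constructor <;> intro h0 <;> rw [h0] at h <;> norm_num at h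
  · have h1 := one_le_norm_padicCoord_sub hx hq
    rw [h, sub_self, norm_zero] at h1
    norm_num at h1

/-- If `s_{ij} ≥ 0` for all pairs `{i,j}` with `i, j ∈ {1, …, N-1}`, then the integral
defining the `p`-adic open string `N`-point zeta function diverges to `+∞`. -/
theorem ZN_diverges_of_nonneg (p : ℕ) [Fact p.Prime] (N : ℕ) (hN : 4 ≤ N)
    (s : ℕ → ℕ → ℝ) (hsym : ∀ i j, s i j = s j i)
    (hpos : ∀ i ∈ Finset.Icc 1 (N - 1), ∀ j ∈ Finset.Icc 1 (N - 1), 0 ≤ s i j) :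
    ∫⁻ x in ZNset p N,
      ENNReal.ofReal
        ((∏ i ∈ Tset N, ‖padicCoord x i‖ ^ s 1 i * ‖1 - padicCoord x i‖ ^ s (N - 1) i) *
          ∏ q ∈ pairsIn (Tset N), ‖padicCoord x q.1 - padicCoord x q.2‖ ^ s q.1 q.2)
      ∂(padicPi p ↥(Tset N)) = ⊤ := by
  have hmem : ∀ i ∈ Tset N, i ∈ Finset.Icc 1 (N - 1) := fun i hi => by
    simp only [Tset, Finset.mem_Icc] at hi ⊢; omega
  have h2 : 2 ∈ Tset N := by simp only [Tset, Finset.mem_Icc]; omega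
  have hsub : (⋃ k, shiftedBox p (Tset N) k) ⊆ ZNset p N :=
    Set.iUnion_subset fun k => shiftedBox_subset_ZNset p N k
  rw [eq_top_iff, ← padicPi_iUnion_shiftedBox p (⟨2, h2⟩ : Tset N) two_pos, ← setLIntegral_one]
  refine le_trans (setLIntegral_mono' (MeasurableSet.iUnion (measurableSet_shiftedBox p _)) ?_)
    (lintegral_mono_set hsub)
  intro x hx
  obtain ⟨k, hk⟩ := Set.mem_iUnion.1 hx
  rw [ENNReal.one_le_ofReal]
  refine one_le_mul_of_one_le_of_one_le
    (Finset.one_le_prod fun i hi => one_le_mul_of_one_le_of_one_le ?_ ?_)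
    (Finset.one_le_prod fun q hq => ?_)
  · exact Real.one_le_rpow (one_lt_norm_padicCoord hk hi).le
      (hpos _ (by simp only [Finset.mem_Icc]; omega) _ (hmem i hi))
  · exact Real.one_le_rpow (one_le_norm_one_sub_padicCoord hk hi)
      (hpos _ (by simp only [Finset.mem_Icc]; omega) _ (hmem i hi))
  · obtain ⟨hm1, hm2⟩ := Finset.mem_product.1 (Finset.mem_filter.1 hq).1
    exact Real.one_le_rpow (one_le_norm_padicCoord_sub hk hq) (hpos _ (hmem _ hm1) _ (hmem _ hm2))
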